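/- Let v be a sequence that is 2-sparse with ||v|| ≥ 2, let k ≥ ||v|| and r ≥ 1. Then for every n, Ex_r(v,k,n) = r·Ex_1(v,k,n). -/

import Mathlib

/-!
Repeating every letter of a `k`-sparse sequence `r` times gives a `(k,r)`-sparse sequence, in
which a 2-sparse `v` can only occur if it already occurs in the original, because it uses at most
one letter of each run. Conversely, the letters at positions `0, r, 2r, ...` of a `(k,r)`-sparse
sequence form a `k`-sparse subsequence containing at least `1/r` of its letters.

That the maxima exist is a pigeonhole argument: cut a `k`-sparse sequence into blocks of length
`‖v‖ ≤ k`. Each block has `‖v‖` distinct letters, and `|v|` blocks with the same set of letters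
contain a copy of `v`.
-/

/-- `u` is `(k,r)`-sparse: for every `j`, the letters at positions
`j, j+r, ..., j+(k-1)r` (those within range) are pairwise distinct. -/
def ArithSparse (k r : ℕ) (u : List ℕ) : Prop :=
  ∀ j a b : ℕ, a < b → b < k → j + b * r < u.length →
    u.getD (j + a * r) 0 ≠ u.getD (j + b * r) 0

/-- Two sequences are isomorphic if one is obtained from the other by a
bijective renaming of letters. -/
def Isomorphic (u v : List ℕ) : Prop := ∃ β : ℕ ≃ ℕ, v = u.map β

/-- `u` contains `v` if `u` has a subsequence isomorphic to `v`. -/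
def Contains (u v : List ℕ) : Prop := ∃ w : List ℕ, w.Sublist u ∧ Isomorphic w v

/-- `Ex v k r n` is the maximum length of a `v`-free, `(k,r)`-sparse sequence
using at most `n` distinct letters. -/
noncomputable def Ex (v : List ℕ) (k r n : ℕ) : ℕ :=
  sSup {l : ℕ | ∃ u : List ℕ,
    u.length = l ∧ ¬ Contains u v ∧ ArithSparse k r u ∧ u.toFinset.card ≤ n}

/-- The lengths of the `v`-free, `(k,r)`-sparse sequences with at most `n` distinct letters;
`Ex v k r n` is the supremum of this set. That it is a maximum is stated with `IsGreatest`, since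
`sSup` gives `0` on an unbounded set of natural numbers. -/
def freeSparseLengths (v : List ℕ) (k r n : ℕ) : Set ℕ :=
  {l | ∃ u : List ℕ, u.length = l ∧ ¬ Contains u v ∧ ArithSparse k r u ∧ u.toFinset.card ≤ n}

theorem arithSparse_iff_getElem?_ne {k r : ℕ} {u : List ℕ} :
    ArithSparse k r u ↔ ∀ j a b : ℕ, a < b → b < k → j + b * r < u.length →
      u[j + a * r]? ≠ u[j + b * r]? := by
  refine forall₃_congr fun j a b => forall₃_congr fun hab _ hb => ?_
  have ha : j + a * r < u.length := hb.trans_le' (by gcongr)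
  simp [List.getD_eq_getElem?_getD, ha, hb]

namespace ArithSparse

variable {k r : ℕ} {u w : List ℕ}

theorem of_infix (hu : ArithSparse k r u) (hw : w <:+: u) : ArithSparse k r w := by
  obtain ⟨x, y, rfl⟩ := hw
  rw [arithSparse_iff_getElem?_ne] at hu ⊢
  intro j a b hab hbk hb
  have getElem?_shift {i : ℕ} (hi : i < w.length) : (x ++ w ++ y)[x.length + i]? = w[i]? := by
    rw [List.append_assoc, List.getElem?_append_right (by omega), Nat.add_sub_cancel_left,
      List.getElem?_append_left hi]
  have ha : j + a * r < w.length := hb.trans_le' (by gcongr)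
  have h := hu (x.length + j) a b hab hbk (by simp only [List.length_append]; omega)
  rwa [add_assoc, add_assoc, getElem?_shift ha, getElem?_shift hb] at h

theorem nodup (hu : ArithSparse k 1 u) (hk : u.length ≤ k) : u.Nodup := by
  rw [arithSparse_iff_getElem?_ne] at hu
  refine List.nodup_iff_getElem?_ne_getElem?.2 fun i j hij hj => ?_
  simpa using hu 0 i j hij (hj.trans_le hk) (by simpa using hj)

theorem isChain_ne (hu : ArithSparse 2 1 u) : u.IsChain (· ≠ ·) := by
  rw [arithSparse_iff_getElem?_ne] at hu
  refine List.isChain_iff_getElem.2 fun i hi => ?_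
  simpa [hi, Nat.lt_of_succ_lt hi] using hu i 0 1 one_pos one_lt_two (by simpa using hi)

end ArithSparse

theorem toFinset_subset_toFinset {α : Type*} [DecidableEq α] {u w : List α} (h : u ⊆ w) :
    u.toFinset ⊆ w.toFinset :=
  fun _ hx => List.mem_toFinset.2 (h (List.mem_toFinset.1 hx))

theorem Contains.of_sublist {u u' v : List ℕ} (hu : u'.Sublist u) (h : Contains u' v) :
    Contains u v :=
  let ⟨w, hw, hiso⟩ := h
  ⟨w, hw.trans hu, hiso⟩

section Stretch

variable {α : Type*}

/-- The sequence `u` with each letter replaced by a run of `r` copies of it, which multiplies by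
`r` the step of any sparsity condition on `u`. -/
def stretch (r : ℕ) (u : List α) : List α :=
  u.flatMap (List.replicate r)

theorem stretch_cons (r : ℕ) (a : α) (u : List α) :
    stretch r (a :: u) = List.replicate r a ++ stretch r u :=
  List.flatMap_cons

theorem length_stretch (r : ℕ) (u : List α) : (stretch r u).length = r * u.length := by
  simp [stretch, List.length_flatMap, mul_comm]

theorem stretch_subset (r : ℕ) (u : List α) : stretch r u ⊆ u := fun x hx => by
  obtain ⟨a, ha, hxa⟩ := List.mem_flatMap.1 hx
  rwa [List.eq_of_mem_replicate hxa]

theorem getElem?_stretch {r : ℕ} (hr : 0 < r) (u : List α) (i : ℕ) :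
    (stretch r u)[i]? = u[i / r]? := by
  induction u generalizing i with
  | nil => simp [stretch]
  | cons a u ih =>
    rw [stretch_cons]
    rcases lt_or_ge i r with hi | hi
    · rw [List.getElem?_append_left (by simpa using hi)]
      simp [hi, Nat.div_eq_of_lt hi]
    · rw [List.getElem?_append_right (by simpa using hi), List.length_replicate, ih,
        Nat.div_eq_sub_div hr hi, List.getElem?_cons_succ]

theorem sublist_of_isChain_ne_of_sublist_stretch {r : ℕ} {u w : List α}
    (hw : w.IsChain (· ≠ ·)) (h : w.Sublist (stretch r u)) : w.Sublist u := by
  induction u generalizing w with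
  | nil => exact h
  | cons a u ih =>
    rw [stretch_cons, List.sublist_append_iff] at h
    obtain ⟨w₁, w₂, rfl, h₁, h₂⟩ := h
    obtain ⟨m, -, rfl⟩ := List.sublist_replicate_iff.1 h₁
    have h_sub : w₂.Sublist u := ih hw.right_of_append h₂
    match m, hw.left_of_append with
    | 0, _ => exact h_sub.cons a
    | 1, _ => exact h_sub.cons_cons a
    | m + 2, h_run => simp [List.replicate_succ] at h_run

theorem Contains.of_stretch {r : ℕ} {u v : List ℕ} (hv : v.IsChain (· ≠ ·))
    (h : Contains (stretch r u) v) : Contains u v := by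
  obtain ⟨w, hw, β, rfl⟩ := h
  have h_chain : w.IsChain (· ≠ ·) :=
    ((List.isChain_map β).1 hv).imp fun _ _ => ne_of_apply_ne β
  exact ⟨w, sublist_of_isChain_ne_of_sublist_stretch h_chain hw, β, rfl⟩

theorem ArithSparse.stretch {k r s : ℕ} {u : List ℕ} (hu : ArithSparse k s u) (hr : 0 < r) :
    ArithSparse k (s * r) (stretch r u) := by
  rw [arithSparse_iff_getElem?_ne] at hu ⊢
  intro j a b hab hbk hb
  have h_index (c : ℕ) : (j + c * (s * r)) / r = j / r + c * s := by
    rw [← mul_assoc, Nat.add_mul_div_right _ _ hr]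
  rw [length_stretch] at hb
  rw [getElem?_stretch hr, getElem?_stretch hr, h_index, h_index]
  exact hu _ a b hab hbk (h_index b ▸ Nat.div_lt_of_lt_mul hb)

end Stretch

section EveryNth

variable {α : Type*} {r : ℕ}

theorem mul_lt_of_lt_ceilDiv {l q : ℕ} (hq : q < l ⌈/⌉ r) : r * q < l := by
  rcases r.eq_zero_or_pos with rfl | hr
  · simp at hq
  · simpa using (ceilDiv_le_iff_le_mul hr).not.1 hq.not_ge

/-- The subsequence of `u` formed by the letters at positions `0, r, 2r, ...`, which divides by
`r` the step of a sparsity condition on `u`. It has `⌈|u| / r⌉` letters, hence none when `r = 0`. -/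
def everyNth (r : ℕ) (u : List α) : List α :=
  List.ofFn fun q : Fin (u.length ⌈/⌉ r) => u[r * q]'(mul_lt_of_lt_ceilDiv q.2)

theorem length_le_mul_length_everyNth (hr : 0 < r) (u : List α) :
    u.length ≤ r * (everyNth r u).length := by
  simpa [everyNth] using le_smul_ceilDiv (b := u.length) hr

theorem getElem?_everyNth (hr : 0 < r) (u : List α) (q : ℕ) :
    (everyNth r u)[q]? = u[r * q]? := by
  rw [everyNth, List.getElem?_ofFn]
  split_ifs with hq
  · rw [List.getElem?_eq_getElem]
  · rw [List.getElem?_eq_none ((ceilDiv_le_iff_le_mul hr).1 (not_lt.1 hq))]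

theorem everyNth_sublist (hr : 0 < r) (u : List α) : (everyNth r u).Sublist u :=
  List.sublist_iff_exists_orderEmbedding_getElem?_eq.2
    ⟨OrderEmbedding.ofStrictMono (r * ·) fun _ _ h => Nat.mul_lt_mul_of_pos_left h hr,
      getElem?_everyNth hr u⟩

theorem ArithSparse.everyNth {k s : ℕ} {u : List ℕ} (hu : ArithSparse k (s * r) u) (hr : 0 < r) :
    ArithSparse k s (everyNth r u) := by
  rw [arithSparse_iff_getElem?_ne] at hu ⊢
  intro j a b hab hbk hb
  have h_index (c : ℕ) : r * (j + c * s) = r * j + c * (s * r) := by ring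
  have hb' : r * (j + b * s) < u.length :=
    mul_lt_of_lt_ceilDiv (by simpa [_root_.everyNth] using hb)
  rw [getElem?_everyNth hr, getElem?_everyNth hr, h_index, h_index]
  exact hu _ a b hab hbk (h_index b ▸ hb')

end EveryNth

theorem isGreatest_freeSparseLengths_mul {v : List ℕ} {k r s n l : ℕ} (hv : v.IsChain (· ≠ ·))
    (hr : 0 < r) (hl : IsGreatest (freeSparseLengths v k s n) l) :
    IsGreatest (freeSparseLengths v k (s * r) n) (r * l) := by
  constructor
  · obtain ⟨u, rfl, h_free, h_sparse, h_card⟩ := hl.1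
    refine ⟨stretch r u, length_stretch r u, mt (Contains.of_stretch hv) h_free,
      h_sparse.stretch hr, h_card.trans' (Finset.card_le_card ?_)⟩
    exact toFinset_subset_toFinset (stretch_subset r u)
  · rintro _ ⟨u, rfl, h_free, h_sparse, h_card⟩
    have h_sub : (everyNth r u).Sublist u := everyNth_sublist hr u
    have h_mem : (everyNth r u).length ∈ freeSparseLengths v k s n :=
      ⟨_, rfl, mt (Contains.of_sublist h_sub) h_free, h_sparse.everyNth hr,
        h_card.trans' (Finset.card_le_card (toFinset_subset_toFinset h_sub.subset))⟩
    calc u.length ≤ r * (everyNth r u).length := length_le_mul_length_everyNth hr u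
      _ ≤ r * l := Nat.mul_le_mul_left r (hl.2 h_mem)

section Finiteness

variable {α : Type*}

theorem exists_flatten_prefix_forall_length_eq (u : List α) (m : ℕ) :
    ∃ L : List (List α), L.flatten <+: u ∧ L.length = u.length / m ∧ ∀ B ∈ L, B.length = m := by
  set sizes := List.replicate (u.length / m) m
  set x := u.take (u.length / m * m)
  have h_sum : sizes.sum = x.length := by
    simp [sizes, x, Nat.div_mul_le_self]
  refine ⟨sizes.splitLengths x, ?_, by simp [sizes], fun B hB => ?_⟩
  · rw [List.flatten_splitLengths _ _ h_sum.ge]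
    exact List.take_prefix _ _
  · have h_mem : B.length ∈ (sizes.splitLengths x).map List.length := List.mem_map_of_mem hB
    rw [List.map_splitLengths_length _ _ h_sum.le] at h_mem
    exact List.eq_of_mem_replicate h_mem

theorem infix_flatten_of_mem {B : List α} {L : List (List α)} (hB : B ∈ L) :
    B <:+: L.flatten := by
  obtain ⟨L₁, L₂, rfl⟩ := List.append_of_mem hB
  exact ⟨L₁.flatten, L₂.flatten, by simp⟩

theorem sublist_flatten_of_forall_mem {w : List α} {L : List (List α)}
    (h_mem : ∀ B ∈ L, w ⊆ B) (h_len : w.length ≤ L.length) : w.Sublist L.flatten := by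
  induction w generalizing L with
  | nil => exact List.nil_sublist _
  | cons a w ih =>
    obtain _ | ⟨B, L⟩ := L
    · simp at h_len
    · have ha : [a].Sublist B := List.singleton_sublist.2 (h_mem B (by simp) (by simp))
      refine ha.append (ih (fun C hC => ?_) (by simpa using h_len))
      exact List.subset_of_cons_subset (h_mem C (List.mem_cons_of_mem _ hC))

theorem exists_perm_map_eq_of_card_eq {s t : Finset α} (h : s.card = t.card) :
    ∃ e : Equiv.Perm α, s.map e.toEmbedding = t := by
  classical
  have := Set.powersetCard.isPretransitive (α := α) (n := t.card)
  obtain ⟨e, he⟩ := MulAction.exists_smul_eq (Equiv.Perm α)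
    (⟨s, h⟩ : Set.powersetCard α t.card) ⟨t, rfl⟩
  exact ⟨e, Finset.map_eq_image .. |>.trans (congrArg Subtype.val he)⟩

theorem contains_flatten {v : List ℕ} {S : Finset ℕ} {L : List (List ℕ)}
    (hS : S.card = v.toFinset.card) (hL : ∀ B ∈ L, S ⊆ B.toFinset) (h_len : v.length ≤ L.length) :
    Contains L.flatten v := by
  obtain ⟨β, hβ⟩ := exists_perm_map_eq_of_card_eq hS
  refine ⟨v.map β.symm, sublist_flatten_of_forall_mem (fun B hB => ?_) (by simpa using h_len),
    β, by simp⟩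
  intro x hx
  obtain ⟨y, hy, rfl⟩ := List.mem_map.1 hx
  refine List.mem_toFinset.1 (hL B hB ?_)
  simpa [← hβ, Finset.mem_map_equiv] using List.mem_toFinset.2 hy

theorem exists_lt_length_filter_of_card_mul_lt_length {β : Type*} [DecidableEq β] {f : α → β}
    {L : List α} {P : Finset β} {c : ℕ} (hf : ∀ a ∈ L, f a ∈ P) (h : P.card * c < L.length) :
    ∃ b ∈ P, c < (L.filter (f · = b)).length := by
  by_contra! h_fiber
  have h_count : ∀ b ∈ P, (L.map f).count b ≤ c := fun b hb => by
    rw [List.count_eq_countP, List.countP_map, List.countP_eq_length_filter]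
    exact h_fiber b hb
  have h_sum : ∑ b ∈ P, (L.map f).count b = L.length := by
    simpa using Multiset.sum_count_eq_card (m := (L.map f : Multiset β)) (by simpa using hf)
  refine h.not_ge ?_
  calc L.length = ∑ b ∈ P, (L.map f).count b := h_sum.symm
    _ ≤ P.card * c := Finset.sum_le_card_nsmul P _ c h_count

theorem length_div_le_of_not_contains {v u : List ℕ} {k : ℕ} (hk : v.toFinset.card ≤ k)
    (h_free : ¬ Contains u v) (h_sparse : ArithSparse k 1 u) :
    u.length / v.toFinset.card ≤ u.toFinset.card.choose v.toFinset.card * v.length := by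
  obtain ⟨L, h_prefix, h_len, h_size⟩ :=
    exists_flatten_prefix_forall_length_eq u v.toFinset.card
  set P := u.toFinset.powersetCard v.toFinset.card
  have h_letters : ∀ B ∈ L, B.toFinset ∈ P := fun B hB => by
    have h_infix : B <:+: u := (infix_flatten_of_mem hB).trans h_prefix.isInfix
    have h_nodup : B.Nodup := (h_sparse.of_infix h_infix).nodup ((h_size B hB).trans_le hk)
    exact Finset.mem_powersetCard.2 ⟨toFinset_subset_toFinset h_infix.subset,
      (List.toFinset_card_of_nodup h_nodup).trans (h_size B hB)⟩
  by_contra! h_long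
  rw [← h_len, ← Finset.card_powersetCard] at h_long
  obtain ⟨S, hS, h_fiber⟩ :=
    exists_lt_length_filter_of_card_mul_lt_length h_letters h_long
  have h_contains : Contains (L.filter (·.toFinset = S)).flatten v :=
    contains_flatten (Finset.mem_powersetCard.1 hS).2
      (fun B hB => (decide_eq_true_iff.1 (List.mem_filter.1 hB).2).ge) h_fiber.le
  exact h_free (h_contains.of_sublist (List.filter_sublist.flatten.trans h_prefix.sublist))

end Finiteness

theorem bddAbove_freeSparseLengths {v : List ℕ} {k : ℕ} (hv : v ≠ []) (hk : v.toFinset.card ≤ k)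
    (n : ℕ) : BddAbove (freeSparseLengths v k 1 n) := by
  set m := v.toFinset.card
  have hm : 0 < m := by simpa [m, Finset.card_pos] using hv
  refine ⟨(n.choose m * v.length + 1) * m, ?_⟩
  rintro _ ⟨u, rfl, h_free, h_sparse, h_card⟩
  have h_blocks : u.length / m < n.choose m * v.length + 1 :=
    Nat.lt_succ_of_le <| (length_div_le_of_not_contains hk h_free h_sparse).trans
      (Nat.mul_le_mul_right _ (Nat.choose_le_choose m h_card))
  exact ((Nat.div_lt_iff_lt_mul hm).1 h_blocks).le

theorem zero_mem_freeSparseLengths {v : List ℕ} (hv : v ≠ []) (k r n : ℕ) :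
    0 ∈ freeSparseLengths v k r n := by
  refine ⟨[], rfl, ?_, ?_, by simp⟩
  · rintro ⟨w, hw, β, rfl⟩
    simp [List.sublist_nil.1 hw] at hv
  · intro j a b _ _ h
    simp at h

theorem isGreatest_Ex_one {v : List ℕ} {k : ℕ} (hv : v ≠ []) (hk : v.toFinset.card ≤ k) (n : ℕ) :
    IsGreatest (freeSparseLengths v k 1 n) (Ex v k 1 n) := by
  have h_bdd := bddAbove_freeSparseLengths hv hk n
  exact ⟨Nat.sSup_mem ⟨0, zero_mem_freeSparseLengths hv k 1 n⟩ h_bdd, fun _ => le_csSup h_bdd⟩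

theorem stmt_4 (v : List ℕ) (k r : ℕ) (h2 : ArithSparse 2 1 v) (hv : 2 ≤ v.toFinset.card)
    (hk : v.toFinset.card ≤ k) (hr : 1 ≤ r) (n : ℕ) :
    Ex v k r n = r * Ex v k 1 n := by
  have hv_ne : v ≠ [] := by
    rintro rfl
    simp at hv
  have h_greatest : IsGreatest (freeSparseLengths v k (1 * r) n) (r * Ex v k 1 n) :=
    isGreatest_freeSparseLengths_mul h2.isChain_ne hr (isGreatest_Ex_one hv_ne hk n)
  rw [one_mul] at h_greatest
  exact h_greatest.csSup_eq
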